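/- For z = a - ik ∈ ℂ, the commutator of the Euler operator with the Heisenberg-Weyl operator satisfies [D, T_z] = (1/√2)·[[0, z],[\overline{z}, 0]]·T_z as operators on S(ℝ, ℂ²). -/

import Mathlib

open Complex

/-- The Heisenberg-Weyl operator: for `z = a - i k` (so `a = z.re`, `k = -z.im`),
`(T_z u)(x) = e^{i(kx - ak/2)} u (x - a)`. -/
noncomputable def heisenbergWeyl (z : ℂ) (u : ℝ → ℂ) (x : ℝ) : ℂ :=
  Complex.exp (I * (((-z.im) : ℝ) * x - z.re * (-z.im) / 2)) * u (x - z.re)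

/-- The one-dimensional Euler operator `D = (1/√2)·[[0, x - ∂ₓ],[x + ∂ₓ, 0]]`. -/
noncomputable def EulerOp (p : (ℝ → ℂ) × (ℝ → ℂ)) : (ℝ → ℂ) × (ℝ → ℂ) :=
  (fun x => ((Real.sqrt 2 : ℂ))⁻¹ * ((x : ℂ) * p.2 x - deriv p.2 x),
   fun x => ((Real.sqrt 2 : ℂ))⁻¹ * ((x : ℂ) * p.1 x + deriv p.1 x))

theorem deriv_heisenbergWeyl_aux (z : ℂ) (u : ℝ → ℂ) (hu : Differentiable ℝ u) (x : ℝ) :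
    deriv (heisenbergWeyl z u) x
      = -(I * z.im) * heisenbergWeyl z u x + heisenbergWeyl z (deriv u) x := by
  have h1 : HasDerivAt (fun y : ℝ => I * (((-z.im : ℝ) : ℂ) * (y : ℂ) - z.re * (-z.im) / 2))
      (I * (((-z.im : ℝ) : ℂ) * 1)) x :=
    (((Complex.ofRealCLM.hasDerivAt (x := x)).const_mul _).sub_const _).const_mul _
  have h2 : HasDerivAt (fun y : ℝ => u (y - z.re)) (deriv u (x - z.re)) x :=
    HasDerivAt.comp_sub_const x z.re (hu (x - z.re)).hasDerivAt
  have h3 : HasDerivAt (heisenbergWeyl z u) _ x := h1.cexp.mul h2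
  rw [h3.deriv]
  simp only [heisenbergWeyl]
  push_cast
  ring

/-- `[D, T_z] = (1/√2)·[[0, z],[\overline{z}, 0]]·T_z` on pairs of functions,
where `T_z` acts diagonally. -/
theorem eulerOp_comm_heisenbergWeyl (z : ℂ) (u v : ℝ → ℂ)
    (hu : Differentiable ℝ u) (hv : Differentiable ℝ v) (x : ℝ) :
    (EulerOp (heisenbergWeyl z u, heisenbergWeyl z v)).1 x
        - heisenbergWeyl z ((EulerOp (u, v)).1) x
      = ((Real.sqrt 2 : ℂ))⁻¹ * (z * heisenbergWeyl z v x) ∧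
    (EulerOp (heisenbergWeyl z u, heisenbergWeyl z v)).2 x
        - heisenbergWeyl z ((EulerOp (u, v)).2) x
      = ((Real.sqrt 2 : ℂ))⁻¹ * ((starRingEnd ℂ) z * heisenbergWeyl z u x) := by
  have hz : z = z.re + z.im * I := (Complex.re_add_im z).symm
  have hc : (starRingEnd ℂ) z = z.re - z.im * I := by
    apply Complex.ext <;> simp
  constructor
  · simp only [EulerOp, deriv_heisenbergWeyl_aux z v hv]
    generalize hw : z * heisenbergWeyl z v x = w
    have hw' : w = (z.re + z.im * I) * heisenbergWeyl z v x := by rw [← hw, ← hz]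
    rw [hw']
    simp only [heisenbergWeyl]
    push_cast
    ring
  · simp only [EulerOp, deriv_heisenbergWeyl_aux z u hu, hc]
    simp only [heisenbergWeyl]
    push_cast
    ring
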